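/- arXiv:1803.04064 — 2 statements merged into one kernel-verified Lean document; each statement's English description precedes it below -/
import Mathlib

section
/- Let L/k be a dihedral extension of number fields of degree 2q (q odd) with Galois group D, and let K, K' be the fixed fields of two distinct order-2 subgroups Σ, Σ'. Let η: Cl(K) ⊕ Cl(K') → Cl(L) be given by extension of ideals. Then, after tensoring with Z[1/2], the kernel of η is isomorphic to H⁰(D, Cl(L) ⊗ Z[1/2]) = (Cl(L) ⊗ Z[1/2])^D, via (c, c') ↦ i_{L/K}(c). -/
open DihedralGroup NumberField IntermediateField
open scoped nonZeroDivisors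


/-- The common fixed points of a family of additive endomorphisms. -/
def fixedPts {M : Type*} [AddCommGroup M] {ι : Type*} (T : ι → (M →+ M)) :
    AddSubgroup M where
  carrier := {x | ∀ i, T i x = x}
  zero_mem' := fun i => map_zero (T i)
  add_mem' := by intro a b ha hb i; rw [map_add, ha i, hb i]
  neg_mem' := by intro a ha i; rw [map_neg, ha i]

/-!
Let `σ` be an involution of a Dedekind domain `B` with fixed ring `A`. Writing an ideal of `B` as
`(x, y)`, Gauss's lemma for the contents of `x + yT` and `σ x + (σ y)T` shows that its product with
its conjugate is extended from the ideal of `A` generated by the norms of `x` and `y` and the trace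
of `x * σ y`. Conversely, if an ideal of `A` becomes principal in `B`, the norm of a generator
generates its square. So once `2` is inverted, `Cl(A)` embeds into `Cl(B)` with image the
`σ`-invariants.

Applied to two involutions, this identifies the kernel of `(c, c') ↦ i(c) + i'(c')` with the
intersection of the two images, which consists of the invariants under both involutions, hence
under the group they generate. Two reflections `s` and `s * r` generate the dihedral group.
-/

section InducedMaps

theorem map_mem_nonZeroDivisors_ideal {A B : Type*} [CommRing A] [IsDomain A]
    [CommRing B] [IsDomain B] {f : A →+* B} (hf : Function.Injective f) (I : (Ideal A)⁰) :
    Ideal.map f (I : Ideal A) ∈ (Ideal B)⁰ :=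
  mem_nonZeroDivisors_of_ne_zero <|
    (Ideal.map_eq_bot_iff_of_injective hf).not.2 (nonZeroDivisors.coe_ne_zero I)

variable {A B C : Type*} [CommRing A] [IsDedekindDomain A] [CommRing B] [IsDedekindDomain B]
  [CommRing C] [IsDedekindDomain C]

/-- `φ` is the homomorphism of class groups induced by the ring homomorphism `f`, that is, it sends
the class of `I` to the class of the extended ideal `I.map f`. This covers both extension of ideals
to a larger ring and the action of a ring automorphism. The target ideal is a variable `J` so that
no proof of `I.map f ≠ ⊥` is needed to state it. -/
def InducesOnClassGroup (f : A →+* B) (φ : ClassGroup A →* ClassGroup B) : Prop :=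
  ∀ (I : (Ideal A)⁰) (J : (Ideal B)⁰), (J : Ideal B) = Ideal.map f (I : Ideal A) →
    φ (ClassGroup.mk0 I) = ClassGroup.mk0 J

namespace InducesOnClassGroup

variable {f : A →+* B} {φ ψ : ClassGroup A →* ClassGroup B}

theorem apply_mk0 (hφ : InducesOnClassGroup f φ) (hf : Function.Injective f) (I : (Ideal A)⁰) :
    φ (ClassGroup.mk0 I) =
      ClassGroup.mk0 ⟨Ideal.map f (I : Ideal A), map_mem_nonZeroDivisors_ideal hf I⟩ :=
  hφ I _ rfl

theorem unique (hφ : InducesOnClassGroup f φ) (hψ : InducesOnClassGroup f ψ)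
    (hf : Function.Injective f) : φ = ψ := by
  ext c
  obtain ⟨I, rfl⟩ := ClassGroup.mk0_surjective c
  rw [hφ.apply_mk0 hf, hψ.apply_mk0 hf]

theorem id : InducesOnClassGroup (RingHom.id A) (MonoidHom.id (ClassGroup A)) := fun I J hJ => by
  rw [MonoidHom.id_apply, Subtype.ext (hJ.trans (Ideal.map_id _))]

theorem comp {g : B →+* C} {χ : ClassGroup B →* ClassGroup C} (hχ : InducesOnClassGroup g χ)
    (hφ : InducesOnClassGroup f φ) (hf : Function.Injective f) :
    InducesOnClassGroup (g.comp f) (χ.comp φ) := fun I J hJ => by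
  rw [MonoidHom.comp_apply, hφ.apply_mk0 hf]
  exact hχ _ J (by rw [hJ, Ideal.map_map])

section Action

variable {R G : Type*} [CommRing R] [Algebra R B] [Monoid G] {ρ : G →* (B ≃ₐ[R] B)}
  {act : G → ClassGroup B →* ClassGroup B}

theorem act_one (hact : ∀ g, InducesOnClassGroup (ρ g : B →+* B) (act g)) :
    act 1 = MonoidHom.id (ClassGroup B) :=
  (hact 1).unique (by rw [map_one]; exact id) (ρ 1).injective

theorem act_mul (hact : ∀ g, InducesOnClassGroup (ρ g : B →+* B) (act g)) (g h : G) :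
    act (g * h) = (act g).comp (act h) :=
  have hρ : (ρ (g * h) : B →+* B) = (ρ g : B →+* B).comp (ρ h : B →+* B) :=
    RingHom.ext fun b => by rw [map_mul]; rfl
  (hact (g * h)).unique (by rw [hρ]; exact (hact g).comp (hact h) (ρ h).injective)
    (ρ (g * h)).injective

end Action

end InducesOnClassGroup

end InducedMaps

section FixedRing

theorem span_coeffs_le_span_pair_mul_span_pair {B : Type*} [CommSemiring B] (x y u v : B) :
    Ideal.span {x * u, x * v + y * u, y * v} ≤ Ideal.span {x, y} * Ideal.span {u, v} := by
  rw [Ideal.span_pair_mul_span_pair, Ideal.span_le]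
  rintro z (rfl | rfl | rfl)
  · exact Ideal.subset_span (by simp)
  · exact add_mem (Ideal.subset_span (by simp)) (Ideal.subset_span (by simp))
  · exact Ideal.subset_span (by simp)

/-- The Dedekind-Mertens lemma for the product of `x + yT` and `u + vT`. -/
theorem span_pair_mul_span_pair_mul_span_pair {B : Type*} [CommRing B] (x y u v : B) :
    Ideal.span {x, y} * (Ideal.span {x, y} * Ideal.span {u, v}) =
      Ideal.span {x, y} * Ideal.span {x * u, x * v + y * u, y * v} := by
  refine le_antisymm ?_ (Ideal.mul_mono_right (span_coeffs_le_span_pair_mul_span_pair x y u v))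
  set I := Ideal.span {x, y} with hI
  set P := Ideal.span {x * u, x * v + y * u, y * v}
  have hx : x ∈ I := Ideal.subset_span (by simp)
  have hy : y ∈ I := Ideal.subset_span (by simp)
  have hxu : x * u ∈ P := Ideal.subset_span (by simp)
  have hmid : x * v + y * u ∈ P := Ideal.subset_span (by simp)
  have hyv : y * v ∈ P := Ideal.subset_span (by simp)
  have hyxu : y * (x * u) ∈ I * P := Ideal.mul_mem_mul hy hxu
  have hxyu : x * (y * u) ∈ I * P := by rwa [mul_left_comm]
  have hxyv : x * (y * v) ∈ I * P := Ideal.mul_mem_mul hx hyv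
  have hyxv : y * (x * v) ∈ I * P := by rwa [mul_left_comm]
  have hxxv : x * (x * v) ∈ I * P := by
    simpa only [mul_add, add_sub_cancel_right] using sub_mem (Ideal.mul_mem_mul hx hmid) hxyu
  have hyyu : y * (y * u) ∈ I * P := by
    simpa only [mul_add, add_sub_cancel_left] using sub_mem (Ideal.mul_mem_mul hy hmid) hyxv
  rw [hI, Ideal.span_pair_mul_span_pair, Ideal.span_mul_span', Ideal.span_le, ← hI]
  rintro _ ⟨_, rfl | rfl, _, rfl | rfl | rfl | rfl, rfl⟩
  exacts [Ideal.mul_mem_mul hx hxu, hxxv, hxyu, hxyv, hyxu, hyxv, hyyu, Ideal.mul_mem_mul hy hyv]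

/-- Gauss's lemma on contents, for the product of `x + yT` and `u + vT`. -/
theorem span_pair_mul_span_pair_eq_span_coeffs {B : Type*} [CommRing B] [IsDedekindDomain B]
    (x y u v : B) :
    Ideal.span {x, y} * Ideal.span {u, v} = Ideal.span {x * u, x * v + y * u, y * v} := by
  rcases eq_or_ne (Ideal.span {x, y}) ⊥ with h0 | h0
  · have hle := span_coeffs_le_span_pair_mul_span_pair x y u v
    rw [h0, Ideal.bot_mul] at hle ⊢
    exact (eq_bot_iff.2 hle).symm
  · exact mul_left_cancel₀ h0 (span_pair_mul_span_pair_mul_span_pair x y u v)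

/-- `A`, as a subring of `B`, is the fixed ring of the involution `σ` of `B`. The identity counts as
an involution. -/
structure IsFixedRingOfInvolution (A : Type*) {B : Type*} [CommRing A] [CommRing B] [Algebra A B]
    (σ : B →+* B) : Prop where
  involutive : Function.Involutive σ
  algebraMap_injective : Function.Injective (algebraMap A B)
  mem_range_iff : ∀ b, b ∈ (algebraMap A B).range ↔ σ b = b

namespace IsFixedRingOfInvolution

variable {A B : Type*} [CommRing A] [CommRing B] [Algebra A B] {σ : B →+* B}

theorem comp_algebraMap (h : IsFixedRingOfInvolution A σ) :
    σ.comp (algebraMap A B) = algebraMap A B :=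
  RingHom.ext fun a => (h.mem_range_iff _).1 ⟨a, rfl⟩

theorem exists_algebraMap_eq_add (h : IsFixedRingOfInvolution A σ) (x y : B) :
    ∃ a, algebraMap A B a = x * σ y + y * σ x :=
  (h.mem_range_iff _).2 (by simp only [map_add, map_mul, h.involutive _]; ring)

theorem exists_algebraMap_eq_norm (h : IsFixedRingOfInvolution A σ) (b : B) :
    ∃ a, algebraMap A B a = b * σ b :=
  (h.mem_range_iff _).2 (by rw [map_mul, h.involutive, mul_comm])

open Polynomial in
theorem isIntegral (h : IsFixedRingOfInvolution A σ) : Algebra.IsIntegral A B where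
  isIntegral b := by
    obtain ⟨t, ht⟩ := h.exists_algebraMap_eq_add b 1
    obtain ⟨n, hn⟩ := h.exists_algebraMap_eq_norm b
    refine ⟨X ^ 2 - C t * X + C n, by monicity!, ?_⟩
    simp only [eval₂_add, eval₂_sub, eval₂_mul, eval₂_pow, eval₂_X, eval₂_C, ht, hn, map_one]
    ring

theorem exists_map_eq_mul_map [IsDedekindDomain B] (h : IsFixedRingOfInvolution A σ)
    (I : Ideal B) : ∃ N : Ideal A, N.map (algebraMap A B) = I * I.map σ := by
  rcases eq_or_ne I ⊥ with rfl | hI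
  · exact ⟨⊥, by rw [Ideal.map_bot, Ideal.bot_mul]⟩
  obtain ⟨x, hxI, hx⟩ := Submodule.exists_mem_ne_zero_of_ne_bot hI
  obtain ⟨y, rfl⟩ := IsDedekindDomain.exists_eq_span_pair hxI hx
  obtain ⟨n, hn⟩ := h.exists_algebraMap_eq_norm x
  obtain ⟨t, ht⟩ := h.exists_algebraMap_eq_add x y
  obtain ⟨m, hm⟩ := h.exists_algebraMap_eq_norm y
  refine ⟨Ideal.span {n, t, m}, ?_⟩
  simp only [Ideal.map_span, Set.image_insert_eq, Set.image_singleton, hn, ht, hm,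
    span_pair_mul_span_pair_eq_span_coeffs]

theorem isPrincipal_sq_of_isPrincipal_map [IsDedekindDomain A] [IsDomain B]
    (h : IsFixedRingOfInvolution A σ) {I : Ideal A} (hI : (I.map (algebraMap A B)).IsPrincipal) :
    (I ^ 2).IsPrincipal := by
  have := h.isIntegral
  have : FaithfulSMul A B := (faithfulSMul_iff_algebraMap_injective A B).2 h.algebraMap_injective
  obtain ⟨x, hx : I.map (algebraMap A B) = Ideal.span {x}⟩ := hI
  obtain ⟨n, hn⟩ := h.exists_algebraMap_eq_norm x
  have hσx : I.map (algebraMap A B) = Ideal.span {σ x} := by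
    rw [← h.comp_algebraMap, ← Ideal.map_map, hx, Ideal.map_span, Set.image_singleton]
  refine ⟨n, Ideal.map_injective_of_faithfullyFlat (B := B) ?_⟩
  calc (I ^ 2).map (algebraMap A B)
      = Ideal.span {x} * Ideal.span {σ x} := by rw [Ideal.map_pow, sq, ← hσx, ← hx]
    _ = (Ideal.span {n}).map (algebraMap A B) := by
      rw [Ideal.span_singleton_mul_span_singleton, Ideal.map_span, Set.image_singleton, hn]

variable [IsDedekindDomain A] [IsDedekindDomain B] {ι : ClassGroup A →* ClassGroup B}
  {τ : ClassGroup B →* ClassGroup B}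

theorem sq_eq_one_of_map_eq_one (h : IsFixedRingOfInvolution A σ)
    (hι : InducesOnClassGroup (algebraMap A B) ι) {c : ClassGroup A} (hc : ι c = 1) :
    c ^ 2 = 1 := by
  obtain ⟨I, rfl⟩ := ClassGroup.mk0_surjective c
  rw [hι.apply_mk0 h.algebraMap_injective, ClassGroup.mk0_eq_one_iff] at hc
  have hsq := h.isPrincipal_sq_of_isPrincipal_map hc
  rw [← ClassGroup.mk0_eq_one_iff (pow_mem I.2 2)] at hsq
  rw [← map_pow, ← hsq]
  rfl

theorem comp_classGroup_map (h : IsFixedRingOfInvolution A σ)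
    (hι : InducesOnClassGroup (algebraMap A B) ι) (hτ : InducesOnClassGroup σ τ) :
    τ.comp ι = ι :=
  (hτ.comp hι h.algebraMap_injective).unique (by rwa [h.comp_algebraMap])
    (h.involutive.injective.comp h.algebraMap_injective)

theorem exists_map_eq_mul (h : IsFixedRingOfInvolution A σ)
    (hι : InducesOnClassGroup (algebraMap A B) ι) (hτ : InducesOnClassGroup σ τ)
    (c : ClassGroup B) : ∃ d, ι d = c * τ c := by
  obtain ⟨I, rfl⟩ := ClassGroup.mk0_surjective c
  obtain ⟨N, hN⟩ := h.exists_map_eq_mul_map (I : Ideal B)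
  have hN0 : N ∈ (Ideal A)⁰ := mem_nonZeroDivisors_of_ne_zero fun hN0 =>
    nonZeroDivisors.coe_ne_zero
      (I * ⟨_, map_mem_nonZeroDivisors_ideal h.involutive.injective I⟩)
      (by rw [Submonoid.coe_mul, ← hN, hN0]; exact Ideal.map_bot)
  refine ⟨ClassGroup.mk0 ⟨N, hN0⟩, ?_⟩
  rw [hτ.apply_mk0 h.involutive.injective, ← map_mul]
  exact hι _ _ hN.symm

end IsFixedRingOfInvolution

end FixedRing

section Localization

theorem localizedModule_map_comp {R X M N : Type*} [CommSemiring R] [AddCommMonoid X] [Module R X]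
    [AddCommMonoid M] [Module R M] [AddCommMonoid N] [Module R N] {S : Submonoid R}
    (g : M →ₗ[R] N) (f : X →ₗ[R] M) :
    LocalizedModule.map S (g ∘ₗ f) = LocalizedModule.map S g ∘ₗ LocalizedModule.map S f := by
  ext a
  induction a using LocalizedModule.induction_on with | _ x s
  simp only [LinearMap.comp_apply, LocalizedModule.map_mk]

variable {R X M : Type*} [CommRing R] [AddCommGroup X] [Module R X] [AddCommGroup M] [Module R M]
  {S : Submonoid R}

theorem localizedModule_map_injective_of_smul_eq_zero {r : R} (hr : r ∈ S) {f : X →ₗ[R] M}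
    (hf : ∀ x, f x = 0 → r • x = 0) : Function.Injective (LocalizedModule.map S f) := by
  rw [injective_iff_map_eq_zero]
  intro a ha
  induction a using LocalizedModule.induction_on with | _ x s
  rw [LocalizedModule.map_mk, IsLocalizedModule.mk_eq_mk', IsLocalizedModule.mk'_eq_zero'] at ha
  obtain ⟨u, hu⟩ := ha
  rw [IsLocalizedModule.mk_eq_mk', IsLocalizedModule.mk'_eq_zero']
  refine ⟨⟨r, hr⟩ * u, ?_⟩
  rw [mul_smul]
  exact hf (u • x) (by rw [Submonoid.smul_def, map_smul]; exact hu)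

/-- On a fixed point `a`, the norm `a + τ a` is `2 • a`, and `2` is invertible. -/
theorem mem_range_localizedModule_map_iff_of_norm (h2 : (2 : R) ∈ S) {f : X →ₗ[R] M}
    {τ : M →ₗ[R] M} (hτ : τ ∘ₗ f = f) (hnorm : ∀ m, ∃ x, f x = m + τ m)
    (a : LocalizedModule S M) :
    a ∈ LinearMap.range (LocalizedModule.map S f) ↔ LocalizedModule.map S τ a = a := by
  constructor
  · rintro ⟨b, rfl⟩
    rw [← LinearMap.comp_apply, ← localizedModule_map_comp, hτ]
  · intro ha
    have h2unit : IsUnit (2 : Localization S) := by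
      simpa only [map_ofNat] using IsLocalization.map_units (Localization S) ⟨2, h2⟩
    have hmem : a + LocalizedModule.map S τ a ∈ LinearMap.range (LocalizedModule.map S f) := by
      induction a using LocalizedModule.induction_on with | _ m s
      obtain ⟨x, hx⟩ := hnorm m
      refine ⟨LocalizedModule.mk x s, ?_⟩
      rw [LocalizedModule.map_mk, LocalizedModule.map_mk, hx]
      simp only [IsLocalizedModule.mk_eq_mk', IsLocalizedModule.mk'_add]
    rwa [ha, ← two_smul (Localization S), Submodule.smul_mem_iff_of_isUnit _ h2unit] at hmem

/-- `φ ⊗ ℤ[1/2]` for a homomorphism `φ` of abelian groups written multiplicatively. -/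
noncomputable abbrev mapInvertTwo {G H : Type*} [CommGroup G] [CommGroup H] (φ : G →* H) :
    LocalizedModule (Submonoid.powers (2 : ℤ)) (Additive G)
      →ₗ[Localization (Submonoid.powers (2 : ℤ))]
      LocalizedModule (Submonoid.powers (2 : ℤ)) (Additive H) :=
  LocalizedModule.map (Submonoid.powers (2 : ℤ)) (MonoidHom.toAdditive φ).toIntLinearMap

theorem mapInvertTwo_id {G : Type*} [CommGroup G] :
    mapInvertTwo (MonoidHom.id G) = LinearMap.id :=
  LocalizedModule.map_id _

theorem mapInvertTwo_comp {G H K : Type*} [CommGroup G] [CommGroup H] [CommGroup K]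
    (ψ : H →* K) (φ : G →* H) :
    mapInvertTwo (ψ.comp φ) = mapInvertTwo ψ ∘ₗ mapInvertTwo φ :=
  localizedModule_map_comp (MonoidHom.toAdditive ψ).toIntLinearMap
    (MonoidHom.toAdditive φ).toIntLinearMap

end Localization

namespace IsFixedRingOfInvolution

variable {A B : Type*} [CommRing A] [IsDedekindDomain A] [CommRing B] [IsDedekindDomain B]
  [Algebra A B] {σ : B →+* B} {ι : ClassGroup A →* ClassGroup B}

theorem mapInvertTwo_injective (h : IsFixedRingOfInvolution A σ)
    (hι : InducesOnClassGroup (algebraMap A B) ι) : Function.Injective (mapInvertTwo ι) :=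
  localizedModule_map_injective_of_smul_eq_zero (Submonoid.mem_powers 2)
    fun _ hc => h.sq_eq_one_of_map_eq_one hι hc

theorem mem_range_mapInvertTwo_iff (h : IsFixedRingOfInvolution A σ)
    (hι : InducesOnClassGroup (algebraMap A B) ι) {τ : ClassGroup B →* ClassGroup B}
    (hτ : InducesOnClassGroup σ τ)
    (a : LocalizedModule (Submonoid.powers (2 : ℤ)) (Additive (ClassGroup B))) :
    a ∈ LinearMap.range (mapInvertTwo ι) ↔ mapInvertTwo τ a = a :=
  mem_range_localizedModule_map_iff_of_norm (f := (MonoidHom.toAdditive ι).toIntLinearMap)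
    (τ := (MonoidHom.toAdditive τ).toIntLinearMap) (Submonoid.mem_powers 2)
    (LinearMap.ext fun c => DFunLike.congr_fun (h.comp_classGroup_map hι hτ) c)
    (h.exists_map_eq_mul hι hτ) a

end IsFixedRingOfInvolution

section KernelAndFixedPoints

/-- The kernel of `(x, y) ↦ f x + f' y` for injective `f` and `f'`, identified by `(x, y) ↦ f x`
with the intersection of the two images. -/
noncomputable def kerCoprodEquivRangeInf {R X Y M : Type*} [Ring R] [AddCommGroup X] [Module R X]
    [AddCommGroup Y] [Module R Y] [AddCommGroup M] [Module R M] {f : X →ₗ[R] M} {f' : Y →ₗ[R] M}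
    (hf : Function.Injective f) (hf' : Function.Injective f') :
    LinearMap.ker (f.coprod f') ≃ₗ[R] ↥(LinearMap.range f ⊓ LinearMap.range f') :=
  LinearEquiv.ofBijective
    ((f ∘ₗ LinearMap.fst R X Y ∘ₗ (LinearMap.ker (f.coprod f')).subtype).codRestrict
      (LinearMap.range f ⊓ LinearMap.range f') fun x => Submodule.mem_inf.2
        ⟨⟨x.1.1, rfl⟩, -x.1.2, (map_neg f' _).trans (eq_neg_of_add_eq_zero_left x.2).symm⟩) <| by
    constructor
    · rw [injective_iff_map_eq_zero]
      rintro ⟨⟨x, y⟩, hxy⟩ h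
      have hx : f x = 0 := congrArg Subtype.val h
      rw [LinearMap.mem_ker, LinearMap.coprod_apply, hx, zero_add] at hxy
      exact Subtype.ext (Prod.ext (hf (hx.trans (map_zero f).symm))
        (hf' (hxy.trans (map_zero f').symm)))
    · rintro ⟨_, ⟨x, rfl⟩, y, hy⟩
      refine ⟨⟨(x, -y), ?_⟩, rfl⟩
      rw [LinearMap.mem_ker, LinearMap.coprod_apply, map_neg, hy, add_neg_cancel]

theorem mem_fixedPts_iff_of_closure_eq_top {G M : Type*} [Group G] [AddCommGroup M]
    (T : G →* AddMonoid.End M) {s : Set G} (hs : Subgroup.closure s = ⊤) (x : M) :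
    x ∈ fixedPts (fun g => (T g : M →+ M)) ↔ ∀ g ∈ s, T g x = x := by
  refine ⟨fun h g _ => h g, fun h g => ?_⟩
  change T g x = x
  have hg : g ∈ Subgroup.closure s := hs ▸ Subgroup.mem_top g
  induction hg using Subgroup.closure_induction with
  | mem g hg => exact h g hg
  | one => rw [map_one, AddMonoid.End.coe_one, id]
  | mul a b _ _ ha hb => rw [map_mul, AddMonoid.End.coe_mul, Function.comp_apply, hb, ha]
  | inv a _ ha =>
    calc T a⁻¹ x = T a⁻¹ (T a x) := by rw [ha]
      _ = (T a⁻¹ * T a) x := rfl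
      _ = x := by rw [← map_mul, inv_mul_cancel, map_one, AddMonoid.End.coe_one, id]

end KernelAndFixedPoints

section DedekindDomain

variable {A A' B R G : Type*} [CommRing A] [IsDedekindDomain A] [CommRing A']
  [IsDedekindDomain A'] [CommRing B] [IsDedekindDomain B] [Algebra A B] [Algebra A' B]
  [CommRing R] [Algebra R B] [Group G]

theorem ker_eta_iso_fixed_classgroup_general (ρ : G →* (B ≃ₐ[R] B)) {g g' : G}
    (hgen : Subgroup.closure {g, g'} = ⊤) (hA : IsFixedRingOfInvolution A (ρ g : B →+* B))
    (hA' : IsFixedRingOfInvolution A' (ρ g' : B →+* B))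
    {ι : ClassGroup A →* ClassGroup B} (hι : InducesOnClassGroup (algebraMap A B) ι)
    {ι' : ClassGroup A' →* ClassGroup B} (hι' : InducesOnClassGroup (algebraMap A' B) ι')
    {act : G → ClassGroup B →* ClassGroup B}
    (hact : ∀ g, InducesOnClassGroup (ρ g : B →+* B) (act g)) :
    ∃ φ : LinearMap.ker ((mapInvertTwo ι).coprod (mapInvertTwo ι')) ≃+
        fixedPts (fun g => (mapInvertTwo (act g)).toAddMonoidHom),
      ∀ x, (φ x : LocalizedModule (Submonoid.powers (2 : ℤ)) (Additive (ClassGroup B))) =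
        mapInvertTwo ι x.1.1 := by
  let T : G →* AddMonoid.End
      (LocalizedModule (Submonoid.powers (2 : ℤ)) (Additive (ClassGroup B))) :=
    { toFun := fun g => (mapInvertTwo (act g)).toAddMonoidHom
      map_one' := by rw [InducesOnClassGroup.act_one hact, mapInvertTwo_id]; rfl
      map_mul' := fun g h => by rw [InducesOnClassGroup.act_mul hact, mapInvertTwo_comp]; rfl }
  have hfixed : (LinearMap.range (mapInvertTwo ι) ⊓ LinearMap.range (mapInvertTwo ι')).toAddSubgroup
      = fixedPts (fun g => (mapInvertTwo (act g)).toAddMonoidHom) := by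
    ext a
    rw [Submodule.mem_toAddSubgroup, Submodule.mem_inf,
      hA.mem_range_mapInvertTwo_iff hι (hact g), hA'.mem_range_mapInvertTwo_iff hι' (hact g')]
    refine .trans ?_ (mem_fixedPts_iff_of_closure_eq_top T hgen a).symm
    simp only [Set.mem_insert_iff, Set.mem_singleton_iff, forall_eq_or_imp, forall_eq]
    rfl
  exact ⟨(kerCoprodEquivRangeInf (hA.mapInvertTwo_injective hι)
    (hA'.mapInvertTwo_injective hι')).toAddEquiv.trans (AddEquiv.addSubgroupCongr hfixed),
    fun _ => rfl⟩

end DedekindDomain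

section Galois

theorem closure_reflections (n : ℕ) :
    Subgroup.closure {sr 0, sr 0 * r 1} = (⊤ : Subgroup (DihedralGroup n)) := by
  set H : Subgroup (DihedralGroup n) := Subgroup.closure {sr 0, sr 0 * r 1}
  have hs : sr 0 ∈ H := Subgroup.subset_closure (by simp)
  have hr : r 1 ∈ H := by
    simpa using mul_mem hs (Subgroup.subset_closure (by simp) : sr 0 * r 1 ∈ H)
  have hrot (i : ZMod n) : r i ∈ H := by
    simpa using zpow_mem hr (i.cast : ℤ)
  refine (Subgroup.eq_top_iff' H).2 fun d => ?_
  cases d with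
  | r i => exact hrot i
  | sr i => simpa using mul_mem hs (hrot i)

theorem closure_symm_reflections {G : Type*} [Group G] {n : ℕ} (e : G ≃* DihedralGroup n) :
    Subgroup.closure {e.symm (sr 0), e.symm (sr 0 * r 1)} = ⊤ := by
  have h := congrArg (Subgroup.map e.symm.toMonoidHom) (closure_reflections n)
  rwa [MonoidHom.map_closure, Set.image_pair,
    Subgroup.map_top_of_surjective _ e.symm.surjective] at h

variable {k L : Type*} [Field k] [Field L] [Algebra k L]

theorem mem_fixedField_comap_closure_singleton {G : Type*} [Group G] (e : (L ≃ₐ[k] L) ≃* G)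
    (s : G) (x : L) :
    x ∈ fixedField ((Subgroup.closure {s}).comap e.toMonoidHom) ↔ e.symm s x = x := by
  rw [mem_fixedField_iff]
  refine ⟨fun h => h _ (by simp), fun h f hf => ?_⟩
  have hle : Subgroup.closure {s} ≤
      (MulAction.stabilizer (L ≃ₐ[k] L) x).comap e.symm.toMonoidHom := by
    rwa [Subgroup.closure_le, Set.singleton_subset_iff]
  simpa using hle hf

theorem isFixedRingOfInvolution_fixedField [NumberField k] [Algebra.IsAlgebraic k L]
    {G : Type*} [Group G] (e : (L ≃ₐ[k] L) ≃* G) {s : G} (hs : s * s = 1)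
    {F : IntermediateField k L} (hF : F = fixedField ((Subgroup.closure {s}).comap e.toMonoidHom)) :
    IsFixedRingOfInvolution (𝓞 F) (galRestrict (𝓞 k) k L (𝓞 L) (e.symm s) : 𝓞 L →+* 𝓞 L) := by
  have hmem (x : L) : x ∈ F ↔ e.symm s x = x := by
    rw [hF, mem_fixedField_comap_closure_singleton]
  set σ := (galRestrict (𝓞 k) k L (𝓞 L) (e.symm s) : 𝓞 L →+* 𝓞 L)
  have hσ (b : 𝓞 L) : (σ b : L) = e.symm s b := algebraMap_galRestrict_apply (𝓞 k) (e.symm s) b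
  refine ⟨fun b => RingOfIntegers.ext ?_, FaithfulSMul.algebraMap_injective _ _, fun b => ⟨?_, ?_⟩⟩
  · rw [hσ, hσ, ← AlgEquiv.mul_apply, ← map_mul, hs, map_one, AlgEquiv.one_apply]
  · rintro ⟨a, rfl⟩
    exact RingOfIntegers.ext ((hσ _).trans ((hmem _).1 (a : F).2))
  · intro hb
    have hbF : (b : L) ∈ F := (hmem _).2 (by rw [← hσ, hb])
    have hint : IsIntegral ℤ (⟨b, hbF⟩ : F) :=
      (isIntegral_algebraMap_iff (FaithfulSMul.algebraMap_injective F L)).1 b.2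
    exact ⟨⟨_, hint⟩, rfl⟩

end Galois

/-- Let `L/k` be a dihedral extension of number fields of degree `2q`
(`q` odd), `K = L^Σ`, `K' = L^Σ'` the fixed fields of two distinct order-2 subgroups, and
`η : Cl(K) ⊕ Cl(K') → Cl(L)` the map given by extension of ideals.  After tensoring with
`ℤ[1/2]`, the kernel of `η` is isomorphic to `(Cl(L) ⊗ ℤ[1/2])^D`, via
`(c, c') ↦ i_{L/K}(c)`.

The ideal-extension maps `ιK, ιK'` on class groups and the Galois action `act` on
`Cl(L)` are characterised in terms of `ClassGroup.mk0` of integral ideals. -/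
theorem ker_eta_iso_fixed_classgroup (q : ℕ) [NeZero q] (hq : Odd q)
    (k L : Type*) [Field k] [Field L] [NumberField k] [NumberField L]
    [Algebra k L] [IsGalois k L]
    (e : (L ≃ₐ[k] L) ≃* DihedralGroup q)
    (K K' : IntermediateField k L)
    (hK : K = fixedField ((Subgroup.closure {(sr 0 : DihedralGroup q)}).comap e.toMonoidHom))
    (hK' : K' = fixedField
      ((Subgroup.closure {(sr 0 * r 1 : DihedralGroup q)}).comap e.toMonoidHom))
    (ιK : ClassGroup (𝓞 ↥K) →* ClassGroup (𝓞 L))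
    (hιK : ∀ (I : (Ideal (𝓞 ↥K))⁰) (J : (Ideal (𝓞 L))⁰),
      (J : Ideal (𝓞 L)) = Ideal.map (algebraMap (𝓞 ↥K) (𝓞 L)) (I : Ideal (𝓞 ↥K)) →
        ιK (ClassGroup.mk0 I) = ClassGroup.mk0 J)
    (ιK' : ClassGroup (𝓞 ↥K') →* ClassGroup (𝓞 L))
    (hιK' : ∀ (I : (Ideal (𝓞 ↥K'))⁰) (J : (Ideal (𝓞 L))⁰),
      (J : Ideal (𝓞 L)) = Ideal.map (algebraMap (𝓞 ↥K') (𝓞 L)) (I : Ideal (𝓞 ↥K')) →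
        ιK' (ClassGroup.mk0 I) = ClassGroup.mk0 J)
    (act : (L ≃ₐ[k] L) → ClassGroup (𝓞 L) →* ClassGroup (𝓞 L))
    (hact : ∀ (g : L ≃ₐ[k] L) (I J : (Ideal (𝓞 L))⁰),
      (J : Ideal (𝓞 L)) = Ideal.map (galRestrict (𝓞 k) k L (𝓞 L) g) (I : Ideal (𝓞 L)) →
        act g (ClassGroup.mk0 I) = ClassGroup.mk0 J) :
    ∃ φ :
      ↥(LinearMap.ker (LinearMap.coprod
        (LocalizedModule.map (Submonoid.powers (2 : ℤ))
          (MonoidHom.toAdditive ιK).toIntLinearMap)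
        (LocalizedModule.map (Submonoid.powers (2 : ℤ))
          (MonoidHom.toAdditive ιK').toIntLinearMap))) ≃+
      ↥(fixedPts (fun g : L ≃ₐ[k] L =>
        (LocalizedModule.map (Submonoid.powers (2 : ℤ))
          (MonoidHom.toAdditive (act g)).toIntLinearMap).toAddMonoidHom)),
      ∀ x (hx : x ∈ LinearMap.ker (LinearMap.coprod
        (LocalizedModule.map (Submonoid.powers (2 : ℤ))
          (MonoidHom.toAdditive ιK).toIntLinearMap)
        (LocalizedModule.map (Submonoid.powers (2 : ℤ))
          (MonoidHom.toAdditive ιK').toIntLinearMap))),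
        (↑(φ ⟨x, hx⟩) : LocalizedModule (Submonoid.powers (2 : ℤ))
            (Additive (ClassGroup (𝓞 L)))) =
          LocalizedModule.map (Submonoid.powers (2 : ℤ))
            (MonoidHom.toAdditive ιK).toIntLinearMap x.1 :=
  (ker_eta_iso_fixed_classgroup_general (galRestrict (𝓞 k) k L (𝓞 L)).toMonoidHom
    (closure_symm_reflections e) (isFixedRingOfInvolution_fixedField e (sr_mul_self 0) hK)
    (isFixedRingOfInvolution_fixedField e (by rw [sr_mul_r, sr_mul_self]) hK')
    hιK hιK' hact).imp fun _ hφ x hx => hφ ⟨x, hx⟩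
end

section
/- Let L/k be a dihedral extension of number fields of degree 2q with q odd, F the quadratic subextension and K, K' the fixed fields of two distinct order-2 subgroups. Then there is an isomorphism of 2-primary parts: (Cl(L)/i_{L/F}Cl(F))₂ ≅ (Cl(K)/i_{K/k}Cl(k))₂ ⊕ (Cl(K')/i_{K'/k}Cl(k))₂, where ( )₂ denotes the 2-primary component and i denotes extension of ideals on class groups. -/
open DihedralGroup NumberField IntermediateField
open scoped nonZeroDivisors

/-- The 2-primary component of a commutative group. -/
def mprimary2 (A : Type*) [CommGroup A] : Subgroup A where
  carrier := {x | ∃ n : ℕ, x ^ (2 ^ n) = 1}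
  one_mem' := ⟨0, one_pow _⟩
  mul_mem' := by
    rintro x y ⟨n, hn⟩ ⟨m, hm⟩
    refine ⟨n + m, ?_⟩
    have hx : x ^ 2 ^ (n + m) = 1 := by
      rw [pow_add, pow_mul, hn, one_pow]
    have hy : y ^ 2 ^ (n + m) = 1 := by
      rw [pow_add, mul_comm, pow_mul, hm, one_pow]
    rw [mul_pow, hx, hy, mul_one]
  inv_mem' := by rintro x ⟨n, hn⟩; exact ⟨n, by rw [inv_pow, hn, inv_one]⟩

/-!
Let `D` be the Galois group, `σ` and `σ'` the two reflections, `ρ = σ σ'` the rotation of order `q`,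
and write `V = Cl(L)/Cl(F)`, `W = Cl(K)/Cl(k)`, `W' = Cl(K')/Cl(k)`. On `V` the norm of the rotation
group is trivial, while `x * σ x` and `x * σ' x` come from `W` and `W'` through the norm.
Extension of ideals `W × W' → V` then has kernel and cokernel killed by the odd number `q`, so it
induces a bijection on 2-primary parts:

* an element of `V` lying in both images is fixed by `σ` and `σ'`, hence by `ρ`, so its `q`-th power
  is its norm under the rotation group, which is `1`;
* since that norm is trivial, `σ x ^ q = y / ρ y` for some `y`, and applying `σ` gives
  `x ^ q = (y * σ y) / (y * σ' y)`.

The map `W → V` is injective because, by the double coset decomposition of `D` with respect to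
`⟨σ⟩`, the norm to `k` of a class `c` of `K` becomes in `K` the product of `c` and the norm from `L`
to `K` of the product of the `ρ ^ (-m) c` over `1 ≤ m ≤ (q - 1) / 2`. If `c` becomes in `L` the
extension of a class of `F`, each `ρ ^ (-m) c` equals that extension, whose norm to `K` comes from
`k`; hence so does `c`.
-/

section TwoPrimary

variable {A B : Type*} [CommGroup A] [CommGroup B]

theorem mprimary2_prod : mprimary2 (A × B) = (mprimary2 A).prod (mprimary2 B) := by
  ext ⟨a, b⟩
  refine ⟨fun ⟨n, hn⟩ => ⟨⟨n, congrArg Prod.fst hn⟩, ⟨n, congrArg Prod.snd hn⟩⟩,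
    fun ⟨⟨n, hn⟩, ⟨m, hm⟩⟩ => ?_⟩
  rw [← Prod.fst_mul_snd (a, b)]
  exact mul_mem ⟨n, Prod.ext hn (one_pow _)⟩ ⟨m, Prod.ext (one_pow _) hm⟩

theorem nonempty_mprimary2_equiv_of_odd_pow (f : A →* B) {n : ℕ} (hn : Odd n)
    (hker : ∀ a, f a = 1 → a ^ n = 1) (hrange : ∀ b, b ^ n ∈ f.range) :
    Nonempty (mprimary2 A ≃* mprimary2 B) := by
  have hmap : mprimary2 A ≤ (mprimary2 B).comap f :=
    fun a ⟨m, hm⟩ => ⟨m, by rw [← map_pow, hm, map_one]⟩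
  refine ⟨MulEquiv.ofBijective (f.subgroupComap (mprimary2 B) |>.comp (Subgroup.inclusion hmap))
    ⟨(injective_iff_map_eq_one _).2 ?_, ?_⟩⟩
  · rintro ⟨a, m, hm⟩ ha
    have hcop : n.Coprime (2 ^ m) := hn.coprime_two_right.pow_right m
    ext
    simpa [hcop] using pow_gcd_eq_one.2 ⟨hker a (congrArg Subtype.val ha), hm⟩
  · rintro ⟨b, m, hm⟩
    obtain ⟨a, ha⟩ := hrange b
    have hfan : f (a ^ n) = b ^ (n * n) := by rw [map_pow, ha, pow_mul]
    have han : (a ^ n) ^ 2 ^ m = 1 := by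
      rw [← pow_mul, mul_comm, pow_mul]
      apply hker
      rw [map_pow, ha, ← pow_mul, mul_comm, pow_mul, hm, one_pow]
    have hcop : (n * n).Coprime (orderOf b) :=
      ((hn.mul hn).coprime_two_right.pow_right m).coprime_dvd_right (orderOf_dvd_of_pow_eq_one hm)
    obtain ⟨s, hs⟩ := exists_pow_eq_self_of_coprime hcop
    refine ⟨⟨a ^ n, m, han⟩ ^ s, Subtype.ext ?_⟩
    change f ((a ^ n) ^ s) = b
    rw [map_pow, hfan, hs]

end TwoPrimary

section Involutions

variable {V W W' : Type*} [CommGroup V] [CommGroup W] [CommGroup W']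

theorem exists_div_apply_eq_pow (ρ : Monoid.End V) {n : ℕ}
    (hρ : ∀ x, ∏ j ∈ Finset.range n, (ρ ^ j) x = 1) (x : V) : ∃ y, y / ρ y = x ^ n := by
  refine ⟨∏ j ∈ Finset.range n, ∏ m ∈ Finset.range j, (ρ ^ m) x, ?_⟩
  have htelescope (j : ℕ) : (∏ m ∈ Finset.range j, (ρ ^ m) x) /
      ρ (∏ m ∈ Finset.range j, (ρ ^ m) x) = x / (ρ ^ j) x := by
    have hsucc (m : ℕ) : ρ ((ρ ^ m) x) = (ρ ^ (m + 1)) x := by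
      rw [pow_succ', Monoid.End.coe_mul, Function.comp_apply]
    rw [map_prod, ← Finset.prod_div_distrib]
    simp only [hsucc]
    exact Finset.prod_range_div' (fun m => (ρ ^ m) x) j
  rw [map_prod, ← Finset.prod_div_distrib, Finset.prod_congr rfl fun j _ => htelescope j,
    Finset.prod_div_distrib, hρ, div_one, Finset.prod_const, Finset.card_range]

variable {σ σ' : Monoid.End V} {i : W →* V} {i' : W' →* V} {n : ℕ}
  (hnorm : ∀ x, ∏ j ∈ Finset.range n, ((σ * σ') ^ j) x = 1)
include hnorm

theorem pow_eq_one_of_apply_eq_self {x : V} (hσ : σ x = x) (hσ' : σ' x = x) : x ^ n = 1 := by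
  have hfix (j : ℕ) : ((σ * σ') ^ j) x = x := by
    rw [Monoid.End.coe_pow]
    exact Function.iterate_fixed (by rw [Monoid.End.coe_mul, Function.comp_apply, hσ', hσ]) j
  simpa only [hfix, Finset.prod_const, Finset.card_range] using hnorm x

theorem pow_eq_one_of_coprod_eq_one (hi : Function.Injective i) (hi' : Function.Injective i')
    (hσ : ∀ w, σ (i w) = i w) (hσ' : ∀ w, σ' (i' w) = i' w) (w : W × W')
    (hw : i.coprod i' w = 1) : w ^ n = 1 := by
  obtain ⟨a, b⟩ := w
  have hab : i a = i' b⁻¹ := by rw [map_inv]; exact eq_inv_of_mul_eq_one_left hw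
  have ha : i a ^ n = 1 :=
    pow_eq_one_of_apply_eq_self hnorm (hσ a) (by rw [hab, hσ'])
  have hb : i' b⁻¹ ^ n = 1 := by rw [← hab, ha]
  rw [← map_pow, map_eq_one_iff i hi] at ha
  rw [← map_pow, map_eq_one_iff i' hi', inv_pow, inv_eq_one] at hb
  exact Prod.ext ha hb

theorem pow_mem_range_coprod (hinv : σ * σ = 1) (hσ : ∀ x, x * σ x ∈ i.range)
    (hσ' : ∀ x, x * σ' x ∈ i'.range) (x : V) : x ^ n ∈ (i.coprod i').range := by
  obtain ⟨y, hy⟩ := exists_div_apply_eq_pow (σ * σ') hnorm (σ x)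
  have hσσ (z : V) : σ (σ z) = z := DFunLike.congr_fun hinv z
  obtain ⟨a, ha⟩ := hσ y
  obtain ⟨b, hb⟩ := hσ' y
  refine ⟨(a, b⁻¹), ?_⟩
  calc i a * i' b⁻¹ = (y * σ y) / (y * σ' y) := by rw [map_inv, ha, hb, div_eq_mul_inv]
    _ = σ y / σ' y := mul_div_mul_left_eq_div _ _ _
    _ = σ (y / (σ * σ') y) := by rw [map_div, Monoid.End.coe_mul, Function.comp_apply, hσσ]
    _ = x ^ n := by rw [hy, map_pow, hσσ]

theorem nonempty_mprimary2_equiv_prod (hn : Odd n) (hi : Function.Injective i)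
    (hi' : Function.Injective i') (hiσ : ∀ w, σ (i w) = i w) (hiσ' : ∀ w, σ' (i' w) = i' w)
    (hinv : σ * σ = 1) (hσ : ∀ x, x * σ x ∈ i.range) (hσ' : ∀ x, x * σ' x ∈ i'.range) :
    Nonempty (mprimary2 V ≃* mprimary2 W × mprimary2 W') := by
  obtain ⟨φ⟩ := nonempty_mprimary2_equiv_of_odd_pow (i.coprod i') hn
    (pow_eq_one_of_coprod_eq_one hnorm hi hi' hiσ hiσ') (pow_mem_range_coprod hnorm hinv hσ hσ')
  exact ⟨φ.symm.trans
    ((MulEquiv.subgroupCongr mprimary2_prod).trans (Subgroup.prodEquiv _ _))⟩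

end Involutions

section QuotientAction

variable {G V : Type*} [Group G] [CommGroup V]

/-- The action on a quotient induced by an action by endomorphisms that preserves the subgroup. -/
def quotientAction (ρ : G →* Monoid.End V) (Q : Subgroup V) (hQ : ∀ g, ∀ x ∈ Q, ρ g x ∈ Q) :
    G →* Monoid.End (V ⧸ Q) where
  toFun g := QuotientGroup.map Q Q (ρ g) (hQ g)
  map_one' := by
    refine QuotientGroup.monoidHom_ext _ (MonoidHom.ext fun x => ?_)
    exact congrArg (QuotientGroup.mk' Q) (DFunLike.congr_fun (map_one ρ) x)
  map_mul' g h := by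
    refine QuotientGroup.monoidHom_ext _ (MonoidHom.ext fun x => ?_)
    exact congrArg (QuotientGroup.mk' Q) (DFunLike.congr_fun (map_mul ρ g h) x)

end QuotientAction

section Products

variable {M G : Type*} [CommMonoid M] [Group G]

theorem prod_zpowers_eq_prod_range (x : G) [Fintype (Subgroup.zpowers x)] (f : G → M) :
    ∏ g : Subgroup.zpowers x, f g = ∏ j ∈ Finset.range (orderOf x), f (x ^ j) := by
  have hx : IsOfFinOrder x := finite_zpowers.1 (Finite.of_fintype (Subgroup.zpowers x))
  rw [Finset.prod_range, ← (finEquivZPowers hx).prod_comp]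
  simp only [finEquivZPowers_apply]

theorem prod_range_two_mul_add_one (f : ℕ → M) (h : ℕ) :
    ∏ j ∈ Finset.range (2 * h + 1), f j =
      f 0 * ∏ m ∈ Finset.range h, f (m + 1) * f (2 * h - m) := by
  rw [Finset.prod_range_succ', mul_comm, two_mul, Finset.prod_range_add,
    ← Finset.prod_range_reflect (fun m => f (h + m + 1)), ← Finset.prod_mul_distrib]
  congr! 4 with m hm
  have := Finset.mem_range.1 hm
  omega

theorem prod_zmod_eq_prod_range {q : ℕ} [NeZero q] (f : ZMod q → M) :
    ∏ z, f z = ∏ j ∈ Finset.range q, f j :=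
  Finset.prod_nbij' ZMod.val Nat.cast (by simp [ZMod.val_lt]) (by simp) (by simp)
    (fun _ hj => ZMod.val_cast_of_lt (Finset.mem_range.1 hj)) (by simp)

theorem prod_dihedralGroup {q : ℕ} [NeZero q] (t : ZMod q) (f : DihedralGroup q → M) :
    ∏ d, f d = (∏ j ∈ Finset.range q, f (r 1 ^ j)) * ∏ j ∈ Finset.range q, f (r 1 ^ j * sr t) := by
  have hshift : ∏ z, f (sr (t - z)) = ∏ z, f (sr z) :=
    Fintype.prod_equiv (Equiv.subLeft t) _ _ fun _ => rfl
  simp only [r_one_pow, r_mul_sr, ← prod_zmod_eq_prod_range (fun z => f (r z)),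
    ← prod_zmod_eq_prod_range (fun z => f (sr (t - z)))]
  rw [hshift, ← equivSum.symm.prod_comp, Fintype.prod_sum_type]
  rfl

end Products

section Dihedral

theorem r_one_pow_mul_sr {q : ℕ} (t : ZMod q) (j : ℕ) :
    r 1 ^ j * sr t = sr t * (r 1 ^ j)⁻¹ := by
  rw [r_one_pow, inv_r, r_mul_sr, sr_mul_r, sub_eq_add_neg]

theorem mem_zpowers_r_one {q : ℕ} (z : ZMod q) : r z ∈ Subgroup.zpowers (r 1 : DihedralGroup q) :=
  Subgroup.mem_zpowers_iff.2 ⟨z.cast, by rw [r_one_zpow, ZMod.intCast_zmod_cast]⟩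

end Dihedral

section Ideals

open Pointwise

section Galois

variable {A C B G : Type*} [CommRing A] [CommRing C] [CommRing B] [Algebra A C] [Algebra C B]
  [Algebra A B] [Group G] [MulSemiringAction G B]

theorem smul_map_algebraMap [SMulCommClass G A B] (g : G) (I : Ideal A) :
    g • I.map (algebraMap A B) = I.map (algebraMap A B) := by
  rw [Ideal.pointwise_smul_def, Ideal.map_map]
  congr 1
  ext a
  simp [smul_algebraMap]

theorem smul_map_algebraMap_of_mem {H : Subgroup G} [IsGaloisGroup H C B] {g : G} (hg : g ∈ H)
    (I : Ideal C) : g • I.map (algebraMap C B) = I.map (algebraMap C B) :=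
  smul_map_algebraMap (⟨g, hg⟩ : H) I

variable [IsDedekindDomain A] [IsDedekindDomain C] [IsDedekindDomain B] [Module.Finite A B]
  [Module.IsTorsionFree A B] [Fintype G] [IsGaloisGroup G A B]

theorem algebraMap_intNorm_eq_prod_smul (x : B) :
    algebraMap A B (Algebra.intNorm A B x) = ∏ g : G, g • x := by
  let := FractionRing.liftAlgebra A (FractionRing B)
  let := IsFractionRing.mulSemiringAction G B (FractionRing B)
  have : IsGalois (FractionRing A) (FractionRing B) := IsGaloisGroup.isGalois G _ _
  rw [Algebra.algebraMap_intNorm_of_isGalois,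
    ← Equiv.prod_comp (IsGaloisGroup.mulEquivAlgEquiv G A B).toEquiv]
  rfl

/-- By the formula for norms of elements the right-hand side divides the left-hand side, and both
have the same relative norm. -/
theorem map_relNorm_eq_prod_smul (I : Ideal B) :
    (Ideal.relNorm A I).map (algebraMap A B) = ∏ g : G, g • I := by
  have hdvd : ∏ g : G, g • I ∣ (Ideal.relNorm A I).map (algebraMap A B) := by
    rw [Ideal.dvd_iff_le, Ideal.map_relNorm, Ideal.span_le]
    rintro _ ⟨x, hxI, rfl⟩
    rw [Function.comp_apply, algebraMap_intNorm_eq_prod_smul (G := G)]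
    exact Ideal.prod_mem_prod fun g _ => Ideal.smul_mem_pointwise_smul g x I hxI
  obtain rfl | hI := eq_or_ne I ⊥
  · rw [Ideal.relNorm_bot, Ideal.map_bot, ← Ideal.zero_eq_bot, eq_comm]
    exact Finset.prod_eq_zero (Finset.mem_univ 1) (smul_zero _)
  obtain ⟨J, hJ⟩ := hdvd
  have hnorm := congrArg (Ideal.relNorm A) hJ
  rw [Ideal.relNorm_algebraMap, map_mul, map_prod] at hnorm
  simp only [Ideal.relNorm_smul, Finset.prod_const, Finset.card_univ] at hnorm
  rw [← IsGaloisGroup.card_eq_finrank' G A B, Nat.card_eq_fintype_card, eq_comm,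
    mul_eq_left₀ (pow_ne_zero _ (by simpa using hI))] at hnorm
  have hJ_top : J = ⊤ := by
    have hle := Ideal.relNorm_le_comap A J
    rwa [hnorm, Ideal.one_eq_top, top_le_iff, Ideal.comap_eq_top_iff] at hle
  rw [hJ, hJ_top, ← Ideal.one_eq_top, mul_one]

theorem map_relNorm_pow_finrank [IsScalarTower A C B] [Module.Finite A C]
    [Module.IsTorsionFree A C] [Module.Finite C B] [Module.IsTorsionFree C B] (I : Ideal C) :
    (Ideal.relNorm A I).map (algebraMap A B) ^ Module.finrank C B =
      ∏ g : G, g • I.map (algebraMap C B) := by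
  rw [← map_relNorm_eq_prod_smul (A := A), ← Ideal.relNorm_relNorm A C (Ideal.map _ I),
    Ideal.relNorm_algebraMap, map_pow, Ideal.map_pow]

end Galois

section Dihedral

variable {q : ℕ} [NeZero q] {A C E B : Type*} [CommRing A] [CommRing C] [CommRing E] [CommRing B]
  [IsDedekindDomain A] [IsDedekindDomain C] [IsDedekindDomain E] [IsDedekindDomain B]
  [Algebra A C] [Algebra A E] [Algebra A B] [Algebra C B] [Algebra E B]
  [IsScalarTower A C B] [IsScalarTower A E B]
  [Module.Finite A E] [Module.Finite A B] [Module.Finite C B] [Module.Finite E B]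
  [Module.IsTorsionFree A E] [Module.IsTorsionFree A B] [Module.IsTorsionFree C B]
  [Module.IsTorsionFree E B]
  [MulSemiringAction (DihedralGroup q) B]

section Rotation

variable [IsGaloisGroup (Subgroup.zpowers (r 1 : DihedralGroup q)) E B]

theorem map_relNorm_eq_prod_r_one_pow_smul (J : Ideal B) :
    (Ideal.relNorm E J).map (algebraMap E B) =
      ∏ j ∈ Finset.range q, (r 1 ^ j : DihedralGroup q) • J := by
  have := Fintype.ofFinite (Subgroup.zpowers (r 1 : DihedralGroup q))
  rw [map_relNorm_eq_prod_smul (G := Subgroup.zpowers (r 1 : DihedralGroup q))]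
  exact (prod_zpowers_eq_prod_range _ fun d : DihedralGroup q => d • J).trans
    (by rw [orderOf_r_one])

theorem map_relNorm_eq_map_mul_sr_smul_map [IsGaloisGroup (DihedralGroup q) A B] (t : ZMod q)
    (I : Ideal E) :
    (Ideal.relNorm A I).map (algebraMap A B) =
      I.map (algebraMap E B) * (sr t : DihedralGroup q) • I.map (algebraMap E B) := by
  have hfinrank : Module.finrank E B = q := by
    rw [← IsGaloisGroup.card_eq_finrank' (Subgroup.zpowers (r 1 : DihedralGroup q)) E B,
      Nat.card_zpowers, orderOf_r_one]
  have hfix {d : DihedralGroup q} (hd : d ∈ Subgroup.zpowers (r 1)) :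
      d • I.map (algebraMap E B) = I.map (algebraMap E B) := smul_map_algebraMap_of_mem hd I
  have hr (j : ℕ) : r 1 ^ j ∈ Subgroup.zpowers (r 1 : DihedralGroup q) :=
    Subgroup.npow_mem_zpowers _ j
  apply pow_left_injective (NeZero.ne q)
  simp only [← hfinrank]
  rw [map_relNorm_pow_finrank (G := DihedralGroup q), prod_dihedralGroup t, hfinrank]
  simp only [r_one_pow_mul_sr, mul_smul, hfix (hr _), hfix (inv_mem (hr _)), Finset.prod_const,
    Finset.card_range, mul_pow]

end Rotation

section Reflection

variable (t : ZMod q) [IsGaloisGroup (Subgroup.zpowers (sr t : DihedralGroup q)) C B]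

theorem map_relNorm_eq_mul_sr_smul (J : Ideal B) :
    (Ideal.relNorm C J).map (algebraMap C B) = J * (sr t : DihedralGroup q) • J := by
  have := Fintype.ofFinite (Subgroup.zpowers (sr t : DihedralGroup q))
  rw [map_relNorm_eq_prod_smul (G := Subgroup.zpowers (sr t : DihedralGroup q))]
  exact (prod_zpowers_eq_prod_range _ fun d : DihedralGroup q => d • J).trans
    (by simp [orderOf_sr, Finset.prod_range_succ])

variable [IsGaloisGroup (DihedralGroup q) A B]
include t

theorem relNorm_map_eq_map_relNorm [IsGaloisGroup (Subgroup.zpowers (r 1 : DihedralGroup q)) E B]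
    (I : Ideal E) :
    Ideal.relNorm C (I.map (algebraMap E B)) = (Ideal.relNorm A I).map (algebraMap A C) := by
  apply Ideal.map_injective_of_faithfullyFlat (B := B)
  rw [map_relNorm_eq_mul_sr_smul t, Ideal.map_map, ← IsScalarTower.algebraMap_eq,
    map_relNorm_eq_map_mul_sr_smul_map t]

variable [Module.Finite A C] [Module.IsTorsionFree A C]

theorem map_relNorm_eq_prod_r_one_pow_smul_map (I : Ideal C) :
    (Ideal.relNorm A I).map (algebraMap A B) =
      ∏ j ∈ Finset.range q, (r 1 ^ j : DihedralGroup q) • I.map (algebraMap C B) := by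
  have hfinrank : Module.finrank C B = 2 := by
    rw [← IsGaloisGroup.card_eq_finrank' (Subgroup.zpowers (sr t : DihedralGroup q)) C B,
      Nat.card_zpowers, orderOf_sr]
  have hfix : (sr t : DihedralGroup q) • I.map (algebraMap C B) = I.map (algebraMap C B) :=
    smul_map_algebraMap_of_mem (Subgroup.mem_zpowers _) I
  apply pow_left_injective two_ne_zero
  simp only [← hfinrank]
  rw [map_relNorm_pow_finrank (G := DihedralGroup q), prod_dihedralGroup t, hfinrank, pow_two]
  simp only [mul_smul, hfix]

/-- The double cosets of `⟨sr t⟩` in the dihedral group are `⟨sr t⟩` itself and the sets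
`⟨sr t⟩ r^m ⟨sr t⟩` for `1 ≤ m ≤ h`. -/
theorem mul_relNorm_prod_smul_map {h : ℕ} (hq : q = 2 * h + 1) (I : Ideal C) :
    I * Ideal.relNorm C (∏ m ∈ Finset.range h,
      (r 1 ^ (m + 1) : DihedralGroup q)⁻¹ • I.map (algebraMap C B)) =
        (Ideal.relNorm A I).map (algebraMap A C) := by
  have hfix : (sr t : DihedralGroup q) • I.map (algebraMap C B) = I.map (algebraMap C B) :=
    smul_map_algebraMap_of_mem (Subgroup.mem_zpowers _) I
  have hinv {m : ℕ} (hm : m ∈ Finset.range h) :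
      (r 1 ^ (m + 1) : DihedralGroup q)⁻¹ = r 1 ^ (2 * h - m) := by
    have := Finset.mem_range.1 hm
    rw [inv_eq_iff_mul_eq_one, ← pow_add, show m + 1 + (2 * h - m) = q by omega, r_one_pow_n]
  apply Ideal.map_injective_of_faithfullyFlat (B := B)
  rw [Ideal.map_mul, map_relNorm_eq_mul_sr_smul t, Ideal.map_map,
    ← IsScalarTower.algebraMap_eq, map_relNorm_eq_prod_r_one_pow_smul_map t,
    show Finset.range q = Finset.range (2 * h + 1) from congrArg _ hq,
    prod_range_two_mul_add_one, pow_zero, one_smul, Finset.smul_prod', ← Finset.prod_mul_distrib]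
  refine congrArg _ (Finset.prod_congr rfl fun m hm => ?_)
  rw [smul_smul, ← r_one_pow_mul_sr, mul_smul, hfix, hinv hm, mul_comm]

end Reflection

end Dihedral

end Ideals

section ClassGroups

open Pointwise ClassGroup

section ClassGroupMap

variable {R S : Type*} [CommRing R] [CommRing S] [IsDedekindDomain R] [IsDedekindDomain S]

/-- The restriction to nonzero ideals of a multiplicative map between ideals that sends nonzero
principal ideals to nonzero principal ideals. -/
def nonzeroIdealMap (f : Ideal R →*₀ Ideal S)
    (hf : ∀ x ≠ 0, ∃ y ≠ 0, f (Ideal.span {x}) = Ideal.span {y}) : (Ideal R)⁰ →* (Ideal S)⁰ :=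
  ((f : Ideal R →* Ideal S).comp (Ideal R)⁰.subtype).codRestrict _ (by
    rintro ⟨I, hI⟩
    rw [mem_nonZeroDivisors_iff_ne_zero] at hI ⊢
    obtain ⟨x, hxI, hx⟩ := Submodule.exists_mem_ne_zero_of_ne_bot hI
    obtain ⟨y, hy, hxy⟩ := hf x hx
    refine ne_zero_of_dvd_ne_zero (q := f (Ideal.span {x})) ?_
      (map_dvd f (Ideal.dvd_span_singleton.2 hxI))
    rwa [hxy, ne_eq, Ideal.zero_eq_bot, Ideal.span_singleton_eq_bot])

variable (f : Ideal R →*₀ Ideal S) (hf : ∀ x ≠ 0, ∃ y ≠ 0, f (Ideal.span {x}) = Ideal.span {y})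

theorem mk0_nonzeroIdealMap_congr {I J : (Ideal R)⁰} (h : mk0 I = mk0 J) :
    mk0 (nonzeroIdealMap f hf I) = mk0 (nonzeroIdealMap f hf J) := by
  obtain ⟨x, y, hx, hy, h⟩ := mk0_eq_mk0_iff.1 h
  obtain ⟨x', hx', hxx'⟩ := hf x hx
  obtain ⟨y', hy', hyy'⟩ := hf y hy
  refine mk0_eq_mk0_iff.2 ⟨x', y', hx', hy', ?_⟩
  change Ideal.span {x'} * f I = Ideal.span {y'} * f J
  rw [← hxx', ← hyy', ← map_mul, h, map_mul]

/-- The homomorphism of class groups induced by a multiplicative map between ideals that sends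
nonzero principal ideals to nonzero principal ideals. -/
noncomputable def classGroupMap : ClassGroup R →* ClassGroup S :=
  MonoidHom.mk' (fun c => mk0 (nonzeroIdealMap f hf (Function.surjInv mk0_surjective c)))
    fun a b => by
      rw [← map_mul, ← map_mul]
      apply mk0_nonzeroIdealMap_congr
      simp only [Function.surjInv_eq mk0_surjective, map_mul]

theorem classGroupMap_mk0 (I : (Ideal R)⁰) :
    classGroupMap f hf (mk0 I) = mk0 (nonzeroIdealMap f hf I) :=
  mk0_nonzeroIdealMap_congr f hf (Function.surjInv_eq mk0_surjective _)

end ClassGroupMap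

section Norm

variable (R : Type*) {S : Type*} [CommRing R] [CommRing S] [IsDedekindDomain R]
  [IsDedekindDomain S] [Algebra R S] [Module.Finite R S] [Module.IsTorsionFree R S]

/-- The relative norm on ideal classes. -/
noncomputable def classGroupNorm : ClassGroup S →* ClassGroup R :=
  classGroupMap (Ideal.relNorm R) fun x hx =>
    ⟨_, Algebra.intNorm_ne_zero.2 hx, Ideal.relNorm_singleton R x⟩

theorem classGroupNorm_mk0 (I : (Ideal S)⁰) :
    classGroupNorm R (mk0 I) = mk0 ⟨Ideal.relNorm R (I : Ideal S), by
      rw [mem_nonZeroDivisors_iff_ne_zero, Ideal.zero_eq_bot, ne_eq, Ideal.relNorm_eq_bot_iff]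
      exact nonZeroDivisors.coe_ne_zero I⟩ :=
  classGroupMap_mk0 _ _ I

end Norm

section Action

variable {G R : Type*} [Group G] [CommRing R] [IsDedekindDomain R] [MulSemiringAction G R]

/-- The automorphism of the class group induced by a single element of a group acting on the
ring. -/
noncomputable def classGroupSMul (g : G) : ClassGroup R →* ClassGroup R :=
  classGroupMap (MulSemiringAction.toRingHom G (Ideal R) g).toMonoidWithZeroHom fun x hx =>
    ⟨g • x, (smul_ne_zero_iff_ne g).2 hx,
      (Ideal.smul_closure g {x}).trans (by rw [Set.smul_set_singleton])⟩

theorem classGroupSMul_mk0 (g : G) (I : (Ideal R)⁰) : classGroupSMul g (mk0 I) =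
    mk0 ⟨g • (I : Ideal R), mem_nonZeroDivisors_iff_ne_zero.2
      ((smul_ne_zero_iff_ne g).2 (nonZeroDivisors.coe_ne_zero I))⟩ :=
  classGroupMap_mk0 _ _ I

theorem classGroupSMul_one_apply (x : ClassGroup R) : classGroupSMul (1 : G) x = x := by
  obtain ⟨I, rfl⟩ := mk0_surjective x
  simp only [classGroupSMul_mk0, one_smul, Subtype.coe_eta]

theorem classGroupSMul_mul_apply (g h : G) (x : ClassGroup R) :
    classGroupSMul (g * h) x = classGroupSMul g (classGroupSMul h x) := by
  obtain ⟨I, rfl⟩ := mk0_surjective x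
  simp only [classGroupSMul_mk0, mul_smul]

/-- The action on ideal classes induced by an action on the ring. -/
noncomputable def classGroupAction : G →* Monoid.End (ClassGroup R) where
  toFun := classGroupSMul
  map_one' := MonoidHom.ext classGroupSMul_one_apply
  map_mul' g h := MonoidHom.ext (classGroupSMul_mul_apply g h)

theorem classGroupAction_mk0 (g : G) (I : (Ideal R)⁰) : classGroupAction g (mk0 I) =
    mk0 ⟨g • (I : Ideal R), mem_nonZeroDivisors_iff_ne_zero.2
      ((smul_ne_zero_iff_ne g).2 (nonZeroDivisors.coe_ne_zero I))⟩ :=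
  classGroupSMul_mk0 g I

theorem classGroupAction_extendedHom_of_mem {C : Type*} [CommRing C] [IsDedekindDomain C]
    [Algebra C R] [Module.IsTorsionFree C R] {H : Subgroup G} [IsGaloisGroup H C R] {g : G}
    (hg : g ∈ H) (c : ClassGroup C) :
    classGroupAction g (extendedHom C R c) = extendedHom C R c := by
  obtain ⟨I, rfl⟩ := mk0_surjective c
  simp only [extendedHom_mk0, classGroupAction_mk0, extendedIdeal, smul_map_algebraMap_of_mem hg]

end Action

theorem eq_extendedHom {A B : Type*} [CommRing A] [CommRing B] [IsDedekindDomain A]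
    [IsDedekindDomain B] [Algebra A B] [Module.IsTorsionFree A B]
    (ι : ClassGroup A →* ClassGroup B)
    (hι : ∀ (I : (Ideal A)⁰) (J : (Ideal B)⁰),
      (J : Ideal B) = Ideal.map (algebraMap A B) (I : Ideal A) → ι (mk0 I) = mk0 J) :
    ι = extendedHom A B := by
  ext x
  obtain ⟨I, rfl⟩ := mk0_surjective x
  rw [extendedHom_mk0, hι I (extendedIdeal A B I) rfl]

section RelClassGroup

variable (A C E B : Type*) [CommRing A] [CommRing C] [CommRing E] [CommRing B]
  [IsDedekindDomain A] [IsDedekindDomain C] [IsDedekindDomain E] [IsDedekindDomain B]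
  [Algebra A C] [Algebra A E] [Algebra A B] [Algebra C B] [Algebra E B]
  [IsScalarTower A C B] [IsScalarTower A E B] [Module.IsTorsionFree A C]
  [Module.IsTorsionFree A E] [Module.IsTorsionFree A B] [Module.IsTorsionFree C B]
  [Module.IsTorsionFree E B]

/-- The quotient of the class group of `C` by the classes extended from `A`. -/
abbrev RelClassGroup : Type _ :=
  ClassGroup C ⧸ (extendedHom A C).range

theorem range_extendedHom_le_comap_range :
    (extendedHom A C).range ≤ (extendedHom E B).range.comap (extendedHom C B) := by
  rintro _ ⟨a, rfl⟩
  exact Subgroup.mem_comap.2 ⟨extendedHom A E a, by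
    rw [extendedHom_comp_apply, extendedHom_comp_apply]⟩

/-- Extension of ideal classes from `C` to `B`, modulo the classes extended from `A` and `E`. -/
noncomputable def relClassGroupMap : RelClassGroup A C →* RelClassGroup E B :=
  QuotientGroup.map _ _ (extendedHom C B) (range_extendedHom_le_comap_range A C E B)

theorem relClassGroupMap_mk (c : ClassGroup C) :
    relClassGroupMap A C E B (c : RelClassGroup A C) = (extendedHom C B c : ClassGroup B) :=
  rfl

theorem relClassGroupMap_injective
    (h : (extendedHom E B).range.comap (extendedHom C B) = (extendedHom A C).range) :
    Function.Injective (relClassGroupMap A C E B) := by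
  rw [← MonoidHom.ker_eq_bot_iff, relClassGroupMap, QuotientGroup.ker_map, h,
    QuotientGroup.map_mk'_self]

end RelClassGroup

section Dihedral

variable {q : ℕ} [NeZero q] {A C E B : Type*} [CommRing A] [CommRing C] [CommRing E] [CommRing B]
  [IsDedekindDomain A] [IsDedekindDomain C] [IsDedekindDomain E] [IsDedekindDomain B]
  [Algebra A C] [Algebra A E] [Algebra A B] [Algebra C B] [Algebra E B]
  [IsScalarTower A C B] [IsScalarTower A E B]
  [Module.Finite A E] [Module.Finite A B] [Module.Finite E B]
  [Module.IsTorsionFree A C] [Module.IsTorsionFree A E]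
  [Module.IsTorsionFree A B] [Module.IsTorsionFree C B] [Module.IsTorsionFree E B]
  [MulSemiringAction (DihedralGroup q) B]

section Rotation

variable [IsGaloisGroup (Subgroup.zpowers (r 1 : DihedralGroup q)) E B]

theorem extendedHom_classGroupNorm_eq_prod_r_one_pow (x : ClassGroup B) :
    extendedHom E B (classGroupNorm E x) =
      ∏ j ∈ Finset.range q, classGroupAction (r 1 ^ j : DihedralGroup q) x := by
  obtain ⟨I, rfl⟩ := mk0_surjective x
  simp only [classGroupNorm_mk0, extendedHom_mk0, classGroupAction_mk0, ← map_prod]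
  refine congrArg mk0 (Subtype.ext ?_)
  rw [Submonoid.coe_finsetProd]
  exact map_relNorm_eq_prod_r_one_pow_smul (I : Ideal B)

theorem extendedHom_classGroupNorm_eq_extendedHom_mul_sr [IsGaloisGroup (DihedralGroup q) A B]
    (t : ZMod q) (d : ClassGroup E) :
    extendedHom A B (classGroupNorm A d) =
      extendedHom E B d * classGroupAction (sr t : DihedralGroup q) (extendedHom E B d) := by
  obtain ⟨I, rfl⟩ := mk0_surjective d
  simp only [classGroupNorm_mk0, extendedHom_mk0, classGroupAction_mk0, ← map_mul]
  congr 1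
  ext1
  exact map_relNorm_eq_map_mul_sr_smul_map t (I : Ideal E)

end Rotation

section Reflection

variable (t : ZMod q) [IsGaloisGroup (Subgroup.zpowers (sr t : DihedralGroup q)) C B]
  [Module.Finite C B]

theorem extendedHom_classGroupNorm_eq_mul_sr (x : ClassGroup B) :
    extendedHom C B (classGroupNorm C x) = x * classGroupAction (sr t : DihedralGroup q) x := by
  obtain ⟨I, rfl⟩ := mk0_surjective x
  simp only [classGroupNorm_mk0, extendedHom_mk0, classGroupAction_mk0, ← map_mul]
  exact congrArg mk0 (Subtype.ext (map_relNorm_eq_mul_sr_smul t _))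

variable [IsGaloisGroup (DihedralGroup q) A B]
include t

theorem classGroupNorm_extendedHom
    [IsGaloisGroup (Subgroup.zpowers (r 1 : DihedralGroup q)) E B] (d : ClassGroup E) :
    classGroupNorm C (extendedHom E B d) = extendedHom A C (classGroupNorm A d) := by
  obtain ⟨I, rfl⟩ := mk0_surjective d
  simp only [classGroupNorm_mk0, extendedHom_mk0]
  exact congrArg mk0 (Subtype.ext (relNorm_map_eq_map_relNorm t _))

variable [Module.Finite A C]

theorem mul_classGroupNorm_prod {h : ℕ} (hq : q = 2 * h + 1) (c : ClassGroup C) :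
    c * classGroupNorm C (∏ m ∈ Finset.range h,
      classGroupAction (r 1 ^ (m + 1) : DihedralGroup q)⁻¹ (extendedHom C B c)) =
        extendedHom A C (classGroupNorm A c) := by
  obtain ⟨I, rfl⟩ := mk0_surjective c
  simp only [classGroupNorm_mk0, extendedHom_mk0, classGroupAction_mk0, ← map_prod, ← map_mul]
  congr 1
  ext1
  simpa using mul_relNorm_prod_smul_map t hq (I : Ideal C)

theorem comap_range_extendedHom [IsGaloisGroup (Subgroup.zpowers (r 1 : DihedralGroup q)) E B]
    (hq : Odd q) : (extendedHom E B).range.comap (extendedHom C B) = (extendedHom A C).range := by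
  refine le_antisymm ?_ (range_extendedHom_le_comap_range A C E B)
  rintro c ⟨d, hd⟩
  obtain ⟨h, hh⟩ := hq
  have hfix (m : ℕ) : classGroupAction (r 1 ^ (m + 1) : DihedralGroup q)⁻¹ (extendedHom E B d) =
      extendedHom E B d :=
    classGroupAction_extendedHom_of_mem
      (inv_mem (Subgroup.npow_mem_zpowers (r 1 : DihedralGroup q) _)) d
  have hc : c * extendedHom A C (classGroupNorm A d) ^ h =
      extendedHom A C (classGroupNorm A c) := by
    rw [← mul_classGroupNorm_prod (A := A) (B := B) t hh, ← hd]
    simp only [hfix, Finset.prod_const, Finset.card_range, map_pow,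
      classGroupNorm_extendedHom (A := A) (C := C) t]
  rw [eq_mul_inv_of_mul_eq hc]
  exact mul_mem (MonoidHom.mem_range.2 ⟨_, rfl⟩)
    (inv_mem (pow_mem (MonoidHom.mem_range.2 ⟨_, rfl⟩) h))

end Reflection

variable [IsGaloisGroup (DihedralGroup q) A B]
  [IsGaloisGroup (Subgroup.zpowers (r 1 : DihedralGroup q)) E B]

variable (A) in
include A in
theorem classGroupAction_extendedHom_mem_range (d : DihedralGroup q) (c : ClassGroup E) :
    classGroupAction d (extendedHom E B c) ∈ (extendedHom E B).range := by
  cases d with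
  | r z =>
    rw [classGroupAction_extendedHom_of_mem (mem_zpowers_r_one z)]
    exact MonoidHom.mem_range.2 ⟨c, rfl⟩
  | sr t =>
    rw [eq_inv_mul_of_mul_eq (extendedHom_classGroupNorm_eq_extendedHom_mul_sr (A := A) t c).symm,
      ← extendedHom_comp_apply A E B, ← map_inv, ← map_mul]
    exact MonoidHom.mem_range.2 ⟨_, rfl⟩

variable (A E B) in
/-- The action of the dihedral group on the class group of `B` modulo the classes extended from
`E`. The base ring `A` serves to show that these classes are preserved. -/
noncomputable def relClassGroupAction : DihedralGroup q →* Monoid.End (RelClassGroup E B) :=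
  quotientAction classGroupAction _ fun d _ ⟨c, hc⟩ =>
    hc ▸ classGroupAction_extendedHom_mem_range A d c

theorem relClassGroupAction_mk (d : DihedralGroup q) (x : ClassGroup B) :
    relClassGroupAction A E B d (x : RelClassGroup E B) = (classGroupAction d x : ClassGroup B) :=
  rfl

theorem prod_relClassGroupAction_r_one_pow (x : RelClassGroup E B) :
    ∏ j ∈ Finset.range q, (relClassGroupAction A E B (r 1 ^ j : DihedralGroup q)) x = 1 := by
  obtain ⟨x, rfl⟩ := QuotientGroup.mk_surjective x
  simp only [relClassGroupAction_mk, ← QuotientGroup.mk_prod]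
  rw [← extendedHom_classGroupNorm_eq_prod_r_one_pow (E := E), QuotientGroup.eq_one_iff]
  exact MonoidHom.mem_range.2 ⟨_, rfl⟩

section Reflection

variable {t : ZMod q} [IsGaloisGroup (Subgroup.zpowers (sr t : DihedralGroup q)) C B]

theorem relClassGroupAction_relClassGroupMap (w : RelClassGroup A C) :
    relClassGroupAction A E B (sr t : DihedralGroup q) (relClassGroupMap A C E B w) =
      relClassGroupMap A C E B w := by
  obtain ⟨c, rfl⟩ := QuotientGroup.mk_surjective w
  rw [relClassGroupMap_mk, relClassGroupAction_mk,
    classGroupAction_extendedHom_of_mem (Subgroup.mem_zpowers _)]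

variable [Module.Finite C B]

theorem mul_relClassGroupAction_mem_range (x : RelClassGroup E B) :
    x * relClassGroupAction A E B (sr t : DihedralGroup q) x ∈
      (relClassGroupMap A C E B).range := by
  obtain ⟨x, rfl⟩ := QuotientGroup.mk_surjective x
  rw [relClassGroupAction_mk, ← QuotientGroup.mk_mul,
    ← extendedHom_classGroupNorm_eq_mul_sr (C := C) t, ← relClassGroupMap_mk A C E B]
  exact MonoidHom.mem_range.2 ⟨_, rfl⟩

end Reflection

variable {C' : Type*} [CommRing C'] [IsDedekindDomain C'] [Algebra A C'] [Algebra C' B]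
  [IsScalarTower A C' B] [Module.Finite A C] [Module.Finite C B] [Module.Finite A C']
  [Module.Finite C' B] [Module.IsTorsionFree A C'] [Module.IsTorsionFree C' B]

theorem nonempty_mprimary2_relClassGroup_equiv_prod (hq : Odd q)
    [IsGaloisGroup (Subgroup.zpowers (sr 0 : DihedralGroup q)) C B]
    [IsGaloisGroup (Subgroup.zpowers (sr 1 : DihedralGroup q)) C' B] :
    Nonempty (mprimary2 (RelClassGroup E B) ≃*
      mprimary2 (RelClassGroup A C) × mprimary2 (RelClassGroup A C')) := by
  refine nonempty_mprimary2_equiv_prod (n := q)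
    (σ := relClassGroupAction A E B (sr 0 : DihedralGroup q))
    (σ' := relClassGroupAction A E B (sr 1 : DihedralGroup q)) (fun x => ?_) hq
    (relClassGroupMap_injective A C E B (comap_range_extendedHom 0 hq))
    (relClassGroupMap_injective A C' E B (comap_range_extendedHom 1 hq))
    relClassGroupAction_relClassGroupMap relClassGroupAction_relClassGroupMap ?_
    mul_relClassGroupAction_mem_range mul_relClassGroupAction_mem_range
  · simp only [← map_mul, ← map_pow, sr_mul_sr, sub_zero]
    exact prod_relClassGroupAction_r_one_pow x
  · rw [← map_mul, sr_mul_self, map_one]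

end Dihedral

end ClassGroups

theorem isGaloisGroup_zpowers_of_comap {G D B : Type*} [Group G] [Group D] [CommRing B]
    [MulSemiringAction G B] [MulSemiringAction D B] (e : G ≃* D)
    (he : ∀ (d : D) (x : B), e.symm d • x = d • x) (d : D) (C : Type*) [CommRing C] [Algebra C B]
    [hC : IsGaloisGroup ((Subgroup.closure {d}).comap e.toMonoidHom) C B] :
    IsGaloisGroup (Subgroup.zpowers d) C B := by
  have : IsGaloisGroup ((Subgroup.zpowers d).map (e.symm : D →* G)) C B := by
    rw [← Subgroup.comap_equiv_eq_map_symm, Subgroup.zpowers_eq_closure]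
    exact hC
  exact .of_mulEquiv (e.symm.subgroupMap (Subgroup.zpowers d)) fun g x => he g x

theorem two_primary_classgroup_split_general {q : ℕ} (hq : Odd q)
    {G A C C' E B : Type*} [Group G] [CommRing A] [CommRing C] [CommRing C'] [CommRing E]
    [CommRing B] [IsDedekindDomain A] [IsDedekindDomain C] [IsDedekindDomain C']
    [IsDedekindDomain E] [IsDedekindDomain B] [Algebra A C] [Algebra A C'] [Algebra A E]
    [Algebra A B] [Algebra C B] [Algebra C' B] [Algebra E B] [IsScalarTower A C B]
    [IsScalarTower A C' B] [IsScalarTower A E B] [Module.Finite A C] [Module.Finite A C']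
    [Module.Finite A E] [Module.Finite A B] [Module.Finite C B] [Module.Finite C' B]
    [Module.Finite E B] [Module.IsTorsionFree A C] [Module.IsTorsionFree A C']
    [Module.IsTorsionFree A E] [Module.IsTorsionFree A B] [Module.IsTorsionFree C B]
    [Module.IsTorsionFree C' B] [Module.IsTorsionFree E B]
    [MulSemiringAction G B] (e : G ≃* DihedralGroup q) [IsGaloisGroup G A B]
    [IsGaloisGroup ((Subgroup.closure {(r 1 : DihedralGroup q)}).comap e.toMonoidHom) E B]
    [IsGaloisGroup ((Subgroup.closure {(sr 0 : DihedralGroup q)}).comap e.toMonoidHom) C B]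
    [IsGaloisGroup ((Subgroup.closure {(sr 0 * r 1 : DihedralGroup q)}).comap e.toMonoidHom) C' B]
    (ιE : ClassGroup E →* ClassGroup B)
    (hιE : ∀ (I : (Ideal E)⁰) (J : (Ideal B)⁰),
      (J : Ideal B) = Ideal.map (algebraMap E B) (I : Ideal E) →
        ιE (ClassGroup.mk0 I) = ClassGroup.mk0 J)
    (ιC : ClassGroup A →* ClassGroup C)
    (hιC : ∀ (I : (Ideal A)⁰) (J : (Ideal C)⁰),
      (J : Ideal C) = Ideal.map (algebraMap A C) (I : Ideal A) →
        ιC (ClassGroup.mk0 I) = ClassGroup.mk0 J)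
    (ιC' : ClassGroup A →* ClassGroup C')
    (hιC' : ∀ (I : (Ideal A)⁰) (J : (Ideal C')⁰),
      (J : Ideal C') = Ideal.map (algebraMap A C') (I : Ideal A) →
        ιC' (ClassGroup.mk0 I) = ClassGroup.mk0 J) :
    Nonempty (mprimary2 (ClassGroup B ⧸ ιE.range) ≃*
      mprimary2 (ClassGroup C ⧸ ιC.range) × mprimary2 (ClassGroup C' ⧸ ιC'.range)) := by
  have : NeZero q := ⟨hq.pos.ne'⟩
  let := MulSemiringAction.compHom B e.symm.toMonoidHom
  have hsmul (d : DihedralGroup q) (x : B) : e.symm d • x = d • x := rfl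
  have : IsGaloisGroup (DihedralGroup q) A B := .of_mulEquiv e.symm hsmul
  have := isGaloisGroup_zpowers_of_comap e hsmul (r 1) E
  have := isGaloisGroup_zpowers_of_comap e hsmul (sr 0) C
  have := isGaloisGroup_zpowers_of_comap e hsmul (sr 0 * r 1) C'
  rw [sr_mul_r, zero_add] at this
  rw [eq_extendedHom ιE hιE, eq_extendedHom ιC hιC, eq_extendedHom ιC' hιC']
  exact nonempty_mprimary2_relClassGroup_equiv_prod hq

theorem isGaloisGroup_ringOfIntegers_fixedField (k L : Type*) [Field k] [Field L] [NumberField k]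
    [NumberField L] [Algebra k L] [IsGalois k L] (H : Subgroup (L ≃ₐ[k] L)) :
    IsGaloisGroup H (𝓞 (fixedField H)) (𝓞 L) := by
  have := IsGaloisGroup.of_fixedPoints_eq (L ≃ₐ[k] L) k L H (fixedField H) rfl
  exact IsGaloisGroup.of_isFractionRing H (𝓞 (fixedField H)) (𝓞 L) (fixedField H) L

/-- Let `L/k` be dihedral of degree `2q` (`q` odd), `F` the quadratic
subextension, `K, K'` the fixed fields of two distinct order-2 subgroups.  Then
`(Cl(L)/i_{L/F}Cl(F))₂ ≅ (Cl(K)/i_{K/k}Cl(k))₂ ⊕ (Cl(K')/i_{K'/k}Cl(k))₂`,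
where `(·)₂` is the 2-primary component and the maps `i` (extension of ideals on class
groups) are characterised via `ClassGroup.mk0`. -/
theorem two_primary_classgroup_split (q : ℕ) [NeZero q] (hq : Odd q)
    (k L : Type*) [Field k] [Field L] [NumberField k] [NumberField L]
    [Algebra k L] [IsGalois k L]
    (e : (L ≃ₐ[k] L) ≃* DihedralGroup q)
    (F K K' : IntermediateField k L)
    (hF : F = fixedField ((Subgroup.closure {(r 1 : DihedralGroup q)}).comap e.toMonoidHom))
    (hK : K = fixedField ((Subgroup.closure {(sr 0 : DihedralGroup q)}).comap e.toMonoidHom))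
    (hK' : K' = fixedField
      ((Subgroup.closure {(sr 0 * r 1 : DihedralGroup q)}).comap e.toMonoidHom))
    (ιF : ClassGroup (𝓞 ↥F) →* ClassGroup (𝓞 L))
    (hιF : ∀ (I : (Ideal (𝓞 ↥F))⁰) (J : (Ideal (𝓞 L))⁰),
      (J : Ideal (𝓞 L)) = Ideal.map (algebraMap (𝓞 ↥F) (𝓞 L)) (I : Ideal (𝓞 ↥F)) →
        ιF (ClassGroup.mk0 I) = ClassGroup.mk0 J)
    (ιK : ClassGroup (𝓞 k) →* ClassGroup (𝓞 ↥K))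
    (hιK : ∀ (I : (Ideal (𝓞 k))⁰) (J : (Ideal (𝓞 ↥K))⁰),
      (J : Ideal (𝓞 ↥K)) = Ideal.map (algebraMap (𝓞 k) (𝓞 ↥K)) (I : Ideal (𝓞 k)) →
        ιK (ClassGroup.mk0 I) = ClassGroup.mk0 J)
    (ιK' : ClassGroup (𝓞 k) →* ClassGroup (𝓞 ↥K'))
    (hιK' : ∀ (I : (Ideal (𝓞 k))⁰) (J : (Ideal (𝓞 ↥K'))⁰),
      (J : Ideal (𝓞 ↥K')) = Ideal.map (algebraMap (𝓞 k) (𝓞 ↥K')) (I : Ideal (𝓞 k)) →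
        ιK' (ClassGroup.mk0 I) = ClassGroup.mk0 J) :
    Nonempty
      (↥(mprimary2 (ClassGroup (𝓞 L) ⧸ ιF.range)) ≃*
        ↥(mprimary2 (ClassGroup (𝓞 ↥K) ⧸ ιK.range)) ×
          ↥(mprimary2 (ClassGroup (𝓞 ↥K') ⧸ ιK'.range))) := by
  subst hF hK hK'
  have := isGaloisGroup_ringOfIntegers_fixedField k L
  exact two_primary_classgroup_split_general hq e ιF hιF ιK hιK ιK' hιK'
end
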